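/- arXiv:1509.06344 — 9 statements merged into one kernel-verified Lean document; each statement's English description precedes it below -/
import Mathlib

section
/- Let (x,y) ∈ [-1,1] × [-1,1] with x ≠ 0 and y ≠ 0, and define u = x·√(x² + y² − x²y²)/√(x² + y²) and v = y·√(x² + y² − x²y²)/√(x² + y²). Then the FG-Squircular disc-to-square formulas recover (x,y): sgn(u·v)/(v·√2) · √(u² + v² − √((u² + v²)(u² + v² − 4u²v²))) = x and sgn(u·v)/(u·√2) · √(u² + v² − √((u² + v²)(u² + v² − 4u²v²))) = y. In particular the quantity u² + v² − 4u²v² is nonnegative. -/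
/-!
The square-to-disc map is radial: `(u, v) = (t * x, t * y)`, where `t > 0` satisfies
`t² (x² + y²) = x² + y² - x² y²`. Put `r² = u² + v²` and `w = (t x y)² = (x v)² = (y u)²`. The
relation for `t` turns into the quadratic equation `w² - r² w + r² u² v² = 0`, whose discriminant is
`r² (r² - 4 u² v²)`. On the square `2 x² y² ≤ x² + y²`, which says that `2 w ≤ r²`, so `w` is the
smaller root: `2 w = r² - √(r² (r² - 4 u² v²))`. Dividing `√w = |x v| = |y u|` by `v` or `u` gives
`x` and `y` up to the sign of `x y`, which is also that of `u v`.
-/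

lemma real_sign_eq_coe_signType_sign (a : ℝ) : Real.sign a = (SignType.sign a : ℝ) := by
  rcases lt_trichotomy a 0 with ha | rfl | ha
  · simp [Real.sign_of_neg ha, sign_neg ha]
  · simp
  · simp [Real.sign_of_pos ha, sign_pos ha]

lemma real_sign_mul_of_pos_right (a : ℝ) {b : ℝ} (hb : 0 < b) :
    Real.sign (a * b) = Real.sign a := by
  simp only [real_sign_eq_coe_signType_sign, sign_mul, sign_pos hb, mul_one]

lemma real_sign_div_mul_abs_mul (a : ℝ) {b : ℝ} (hb : b ≠ 0) :
    Real.sign (a * b) / b * |a * b| = a := by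
  rw [real_sign_eq_coe_signType_sign, div_mul_eq_mul_div, sign_mul_abs, mul_div_cancel_right₀ a hb]

lemma two_mul_sq_mul_sq_le_of_mem_Icc {x y : ℝ} (hx : x ∈ Set.Icc (-1 : ℝ) 1)
    (hy : y ∈ Set.Icc (-1 : ℝ) 1) : 2 * (x ^ 2 * y ^ 2) ≤ x ^ 2 + y ^ 2 := by
  have hx1 : x ^ 2 ≤ 1 := (sq_le_one_iff_abs_le_one x).2 (abs_le.2 hx)
  have hy1 : y ^ 2 ≤ 1 := (sq_le_one_iff_abs_le_one y).2 (abs_le.2 hy)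
  linarith [mul_le_of_le_one_right (sq_nonneg x) hy1, mul_le_of_le_one_left (sq_nonneg y) hx1]

/-- The factor by which the FG-Squircular square-to-disc map scales the point `(x, y)` along its ray
from the origin. At the origin, division by zero gives it the value `0`. -/
noncomputable def squircularScale (x y : ℝ) : ℝ :=
  √(x ^ 2 + y ^ 2 - x ^ 2 * y ^ 2) / √(x ^ 2 + y ^ 2)

lemma squircularScale_pos {x y : ℝ} (h : 0 < x ^ 2 + y ^ 2 - x ^ 2 * y ^ 2) :
    0 < squircularScale x y := by
  have hr : 0 < x ^ 2 + y ^ 2 := by linarith [mul_nonneg (sq_nonneg x) (sq_nonneg y)]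
  exact div_pos (Real.sqrt_pos.2 h) (Real.sqrt_pos.2 hr)

lemma squircularScale_sq_mul {x y : ℝ} (h : 0 < x ^ 2 + y ^ 2 - x ^ 2 * y ^ 2) :
    squircularScale x y ^ 2 * (x ^ 2 + y ^ 2) = x ^ 2 + y ^ 2 - x ^ 2 * y ^ 2 := by
  have hr : 0 < x ^ 2 + y ^ 2 := by linarith [mul_nonneg (sq_nonneg x) (sq_nonneg y)]
  rw [squircularScale, div_pow, Real.sq_sqrt h.le, Real.sq_sqrt hr.le, div_mul_cancel₀ _ hr.ne']

lemma squircular_quadratic_eq_zero {R : Type*} [CommRing R] {x y t : R}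
    (ht : t ^ 2 * (x ^ 2 + y ^ 2) = x ^ 2 + y ^ 2 - x ^ 2 * y ^ 2) :
    1 * ((x * y * t) ^ 2 * (x * y * t) ^ 2) + -((x * t) ^ 2 + (y * t) ^ 2) * (x * y * t) ^ 2 +
      ((x * t) ^ 2 + (y * t) ^ 2) * ((x * t) ^ 2 * (y * t) ^ 2) = 0 := by
  linear_combination (x ^ 2 * y ^ 2 * t ^ 4) * ht

lemma squircular_discrim_eq_sq {R : Type*} [CommRing R] {x y t : R}
    (ht : t ^ 2 * (x ^ 2 + y ^ 2) = x ^ 2 + y ^ 2 - x ^ 2 * y ^ 2) :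
    ((x * t) ^ 2 + (y * t) ^ 2) * ((x * t) ^ 2 + (y * t) ^ 2 - 4 * (x * t) ^ 2 * (y * t) ^ 2) =
      ((x * t) ^ 2 + (y * t) ^ 2 - 2 * (x * y * t) ^ 2) ^ 2 := by
  have hdiscrim := discrim_eq_sq_of_quadratic_eq_zero (squircular_quadratic_eq_zero ht)
  rw [discrim] at hdiscrim
  linear_combination hdiscrim

section

variable {x y t : ℝ}

lemma squircular_discrim_factor_nonneg
    (ht : t ^ 2 * (x ^ 2 + y ^ 2) = x ^ 2 + y ^ 2 - x ^ 2 * y ^ 2) :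
    0 ≤ (x * t) ^ 2 + (y * t) ^ 2 - 4 * (x * t) ^ 2 * (y * t) ^ 2 := by
  rcases (add_nonneg (sq_nonneg (x * t)) (sq_nonneg (y * t))).eq_or_lt with hr | hr
  · have hxt : (x * t) ^ 2 = 0 := by linarith [sq_nonneg (x * t), sq_nonneg (y * t)]
    simp only [hxt, mul_zero, zero_mul, sub_zero, zero_add]
    exact sq_nonneg _
  · rw [← mul_nonneg_iff_of_pos_left hr, squircular_discrim_eq_sq ht]
    exact sq_nonneg _

lemma sqrt_sub_sqrt_squircular_discrim
    (ht : t ^ 2 * (x ^ 2 + y ^ 2) = x ^ 2 + y ^ 2 - x ^ 2 * y ^ 2)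
    (hxy : 2 * (x ^ 2 * y ^ 2) ≤ x ^ 2 + y ^ 2) :
    √((x * t) ^ 2 + (y * t) ^ 2 - √(((x * t) ^ 2 + (y * t) ^ 2) *
      ((x * t) ^ 2 + (y * t) ^ 2 - 4 * (x * t) ^ 2 * (y * t) ^ 2))) = √2 * |x * y * t| := by
  have hsmaller : 0 ≤ (x * t) ^ 2 + (y * t) ^ 2 - 2 * (x * y * t) ^ 2 := by
    linarith [mul_le_mul_of_nonneg_right hxy (sq_nonneg t)]
  rw [squircular_discrim_eq_sq ht, Real.sqrt_sq hsmaller, sub_sub_cancel,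
    Real.sqrt_mul zero_le_two, Real.sqrt_sq_eq_abs]

lemma real_sign_div_mul_sqrt_two_mul_abs (hy : y ≠ 0) (ht : 0 < t) :
    Real.sign (x * t * (y * t)) / (y * t * √2) * (√2 * |x * y * t|) = x := by
  have hsign : Real.sign (x * t * (y * t)) = Real.sign (x * (y * t)) := by
    rw [mul_right_comm, real_sign_mul_of_pos_right _ ht]
  calc Real.sign (x * t * (y * t)) / (y * t * √2) * (√2 * |x * y * t|)
      = Real.sign (x * (y * t)) / (y * t) * |x * (y * t)| := by
        rw [hsign, mul_assoc x y t]; field_simp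
    _ = x := real_sign_div_mul_abs_mul x (mul_ne_zero hy ht.ne')

end

theorem fg_squircular_left_inverse_general
    (x y u v : ℝ)
    (hxy : 2 * (x ^ 2 * y ^ 2) ≤ x ^ 2 + y ^ 2)
    (hx0 : x ≠ 0) (hy0 : y ≠ 0)
    (hu : u = x * Real.sqrt (x ^ 2 + y ^ 2 - x ^ 2 * y ^ 2) / Real.sqrt (x ^ 2 + y ^ 2))
    (hv : v = y * Real.sqrt (x ^ 2 + y ^ 2 - x ^ 2 * y ^ 2) / Real.sqrt (x ^ 2 + y ^ 2)) :
    u ^ 2 + v ^ 2 - 4 * u ^ 2 * v ^ 2 ≥ 0 ∧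
    Real.sign (u * v) / (v * Real.sqrt 2) *
      Real.sqrt (u ^ 2 + v ^ 2 -
        Real.sqrt ((u ^ 2 + v ^ 2) * (u ^ 2 + v ^ 2 - 4 * u ^ 2 * v ^ 2))) = x ∧
    Real.sign (u * v) / (u * Real.sqrt 2) *
      Real.sqrt (u ^ 2 + v ^ 2 -
        Real.sqrt ((u ^ 2 + v ^ 2) * (u ^ 2 + v ^ 2 - 4 * u ^ 2 * v ^ 2))) = y := by
  have hradicand : 0 < x ^ 2 + y ^ 2 - x ^ 2 * y ^ 2 := by
    have : 0 < x ^ 2 * y ^ 2 := by positivity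
    linarith
  have hpos := squircularScale_pos hradicand
  have hscale := squircularScale_sq_mul hradicand
  rw [mul_div_assoc, ← squircularScale] at hu hv
  subst hu hv
  rw [sqrt_sub_sqrt_squircular_discrim hscale hxy]
  refine ⟨squircular_discrim_factor_nonneg hscale,
    real_sign_div_mul_sqrt_two_mul_abs hy0 hpos, ?_⟩
  rw [mul_comm (x * _), mul_comm x y]
  exact real_sign_div_mul_sqrt_two_mul_abs hx0 hpos

/-- The FG-Squircular disc-to-square formulas invert the square-to-disc map. -/
theorem fg_squircular_left_inverse
    (x y u v : ℝ)
    (hx : x ∈ Set.Icc (-1 : ℝ) 1) (hy : y ∈ Set.Icc (-1 : ℝ) 1)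
    (hx0 : x ≠ 0) (hy0 : y ≠ 0)
    (hu : u = x * Real.sqrt (x ^ 2 + y ^ 2 - x ^ 2 * y ^ 2) / Real.sqrt (x ^ 2 + y ^ 2))
    (hv : v = y * Real.sqrt (x ^ 2 + y ^ 2 - x ^ 2 * y ^ 2) / Real.sqrt (x ^ 2 + y ^ 2)) :
    u ^ 2 + v ^ 2 - 4 * u ^ 2 * v ^ 2 ≥ 0 ∧
    Real.sign (u * v) / (v * Real.sqrt 2) *
      Real.sqrt (u ^ 2 + v ^ 2 -
        Real.sqrt ((u ^ 2 + v ^ 2) * (u ^ 2 + v ^ 2 - 4 * u ^ 2 * v ^ 2))) = x ∧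
    Real.sign (u * v) / (u * Real.sqrt 2) *
      Real.sqrt (u ^ 2 + v ^ 2 -
        Real.sqrt ((u ^ 2 + v ^ 2) * (u ^ 2 + v ^ 2 - 4 * u ^ 2 * v ^ 2))) = y :=
  fg_squircular_left_inverse_general x y u v (two_mul_sq_mul_sq_le_of_mem_Icc hx hy) hx0 hy0 hu hv
end

section
/- Let (u,v) ∈ ℝ² with u² + v² ≤ 1, u ≠ 0 and v ≠ 0, and define x = sgn(u·v)/(v·√2) · √(u² + v² − √((u² + v²)(u² + v² − 4u²v²))) and y = sgn(u·v)/(u·√2) · √(u² + v² − √((u² + v²)(u² + v² − 4u²v²))). Then (x,y) ≠ (0,0) and the FG-Squircular square-to-disc map recovers (u,v): x·√(x² + y² − x²y²)/√(x² + y²) = u and y·√(x² + y² − x²y²)/√(x² + y²) = v. -/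
/-!
The FG-Squircular map sends the squircle `x² + y² - x²y² = r²` to the circle of radius `r` along
rays through the origin. Hence `(u, v)` is recovered from a point `(k u, k v)` with `k > 0` as soon
as this point lies on the squircle with `r² = u² + v²`, which says that `T = k²` is a root of
`(u v)² T² - (u² + v²) T + (u² + v²)`. The disc-to-square formulas scale `(u, v)` by the square
root of the smaller root. The roots are real exactly when `4 u² v² ≤ u² + v²`, a region containing
the unit disc.
-/

/-- The FG-Squircular map from the square to the disc, with the value `(0, 0)` at the origin. -/
noncomputable def fgSquareToDisc (x y : ℝ) : ℝ × ℝ :=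
  (x * √(x ^ 2 + y ^ 2 - x ^ 2 * y ^ 2) / √(x ^ 2 + y ^ 2),
    y * √(x ^ 2 + y ^ 2 - x ^ 2 * y ^ 2) / √(x ^ 2 + y ^ 2))

/-- The factor by which the disc-to-square formulas stretch the vector `(u, v)`. On the axes
division by zero makes it `0`; for `u² + v² < 4 u² v²` the inner root has the junk value `0`. -/
noncomputable def discToSquareScale (u v : ℝ) : ℝ :=
  √(u ^ 2 + v ^ 2 - √((u ^ 2 + v ^ 2) * (u ^ 2 + v ^ 2 - 4 * u ^ 2 * v ^ 2))) / (|u * v| * √2)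

theorem discToSquareScale_comm (u v : ℝ) : discToSquareScale u v = discToSquareScale v u := by
  simp only [discToSquareScale, add_comm (u ^ 2), mul_comm u, mul_right_comm 4 (u ^ 2)]

theorem real_sign_mul_abs (r : ℝ) : Real.sign r * |r| = r := by
  rcases lt_trichotomy r 0 with hr | rfl | hr
  · rw [Real.sign_of_neg hr, abs_of_neg hr, neg_one_mul, neg_neg]
  · rw [abs_zero, mul_zero]
  · rw [Real.sign_of_pos hr, abs_of_pos hr, one_mul]

theorem sign_mul_div_right (a b : ℝ) : Real.sign (a * b) / b = a / |a * b| := by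
  rcases eq_or_ne (a * b) 0 with hab | hab
  · simp [hab]
  · have hb : b ≠ 0 := right_ne_zero_of_mul hab
    rw [div_eq_div_iff hb (abs_ne_zero.mpr hab)]
    exact real_sign_mul_abs (a * b)

theorem sign_mul_div_mul_sqrt_eq_discToSquareScale_mul (u v : ℝ) :
    Real.sign (u * v) / (v * √2) *
        √(u ^ 2 + v ^ 2 - √((u ^ 2 + v ^ 2) * (u ^ 2 + v ^ 2 - 4 * u ^ 2 * v ^ 2))) =
      discToSquareScale u v * u := by
  rw [← div_div, sign_mul_div_right, discToSquareScale]
  ring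

theorem sqrt_mul_sub_le {s a : ℝ} (hs : 0 ≤ s) (ha : 0 ≤ a) : √(s * (s - a)) ≤ s :=
  Real.sqrt_le_iff.mpr ⟨hs, by nlinarith [mul_nonneg hs ha]⟩

theorem sqrt_mul_sub_lt {s a : ℝ} (hs : 0 < s) (ha : 0 < a) : √(s * (s - a)) < s :=
  (Real.sqrt_lt' hs).mpr (by nlinarith [mul_pos hs ha])

theorem discToSquareScale_pos {u v : ℝ} (hu : u ≠ 0) (hv : v ≠ 0) : 0 < discToSquareScale u v :=
  have hlt := sqrt_mul_sub_lt (s := u ^ 2 + v ^ 2) (a := 4 * u ^ 2 * v ^ 2)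
    (by positivity) (by positivity)
  div_pos (Real.sqrt_pos.mpr (sub_pos.mpr hlt)) (by positivity)

theorem discToSquareScale_sq (u v : ℝ) :
    discToSquareScale u v ^ 2 =
      (u ^ 2 + v ^ 2 - √((u ^ 2 + v ^ 2) * (u ^ 2 + v ^ 2 - 4 * u ^ 2 * v ^ 2))) /
        (2 * (u * v) ^ 2) := by
  have hle := sqrt_mul_sub_le (s := u ^ 2 + v ^ 2) (a := 4 * u ^ 2 * v ^ 2)
    (by positivity) (by positivity)
  rw [discToSquareScale, div_pow, Real.sq_sqrt (sub_nonneg.mpr hle), mul_pow, sq_abs,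
    Real.sq_sqrt zero_le_two, mul_comm 2]

theorem discToSquareScale_mul_mem_squircle {u v : ℝ} (hu : u ≠ 0) (hv : v ≠ 0)
    (huv : 4 * u ^ 2 * v ^ 2 ≤ u ^ 2 + v ^ 2) :
    (discToSquareScale u v * u) ^ 2 + (discToSquareScale u v * v) ^ 2 -
      (discToSquareScale u v * u) ^ 2 * (discToSquareScale u v * v) ^ 2 = u ^ 2 + v ^ 2 := by
  have hdiscrim : discrim ((u * v) ^ 2) (-(u ^ 2 + v ^ 2)) (u ^ 2 + v ^ 2) =
      √((u ^ 2 + v ^ 2) * (u ^ 2 + v ^ 2 - 4 * u ^ 2 * v ^ 2)) *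
        √((u ^ 2 + v ^ 2) * (u ^ 2 + v ^ 2 - 4 * u ^ 2 * v ^ 2)) := by
    rw [Real.mul_self_sqrt (mul_nonneg (by positivity) (sub_nonneg.mpr huv)), discrim]
    ring
  have hroot := (quadratic_eq_zero_iff (pow_ne_zero 2 (mul_ne_zero hu hv)) hdiscrim
    (discToSquareScale u v ^ 2)).mpr (Or.inr (by rw [discToSquareScale_sq, neg_neg]))
  linear_combination -hroot

theorem mul_sqrt_sq_add_sq_div_cancel (u v : ℝ) : u * √(u ^ 2 + v ^ 2) / √(u ^ 2 + v ^ 2) = u :=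
  mul_div_cancel_of_imp fun h ↦ by
    have hsq : u ^ 2 + v ^ 2 ≤ 0 := Real.sqrt_eq_zero'.mp h
    exact pow_eq_zero_iff two_ne_zero |>.mp (by nlinarith [sq_nonneg u, sq_nonneg v])

theorem fgSquareToDisc_mul_of_mem_squircle {k u v : ℝ} (hk : 0 < k)
    (h : (k * u) ^ 2 + (k * v) ^ 2 - (k * u) ^ 2 * (k * v) ^ 2 = u ^ 2 + v ^ 2) :
    fgSquareToDisc (k * u) (k * v) = (u, v) := by
  have hnorm : √((k * u) ^ 2 + (k * v) ^ 2) = k * √(u ^ 2 + v ^ 2) := by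
    rw [mul_pow, mul_pow, ← mul_add, Real.sqrt_mul (sq_nonneg k), Real.sqrt_sq hk.le]
  rw [fgSquareToDisc, h, hnorm, mul_assoc, mul_assoc, mul_div_mul_left _ _ hk.ne',
    mul_div_mul_left _ _ hk.ne', mul_sqrt_sq_add_sq_div_cancel, add_comm,
    mul_sqrt_sq_add_sq_div_cancel]

theorem fg_squircular_right_inverse_general
    (u v x y : ℝ)
    (huv : 4 * u ^ 2 * v ^ 2 ≤ u ^ 2 + v ^ 2) (hu0 : u ≠ 0) (hv0 : v ≠ 0)
    (hx : x = Real.sign (u * v) / (v * √2) *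
      √(u ^ 2 + v ^ 2 - √((u ^ 2 + v ^ 2) * (u ^ 2 + v ^ 2 - 4 * u ^ 2 * v ^ 2))))
    (hy : y = Real.sign (u * v) / (u * √2) *
      √(u ^ 2 + v ^ 2 - √((u ^ 2 + v ^ 2) * (u ^ 2 + v ^ 2 - 4 * u ^ 2 * v ^ 2)))) :
    (x, y) ≠ (0, 0) ∧
    x * √(x ^ 2 + y ^ 2 - x ^ 2 * y ^ 2) / √(x ^ 2 + y ^ 2) = u ∧
    y * √(x ^ 2 + y ^ 2 - x ^ 2 * y ^ 2) / √(x ^ 2 + y ^ 2) = v := by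
  have hscale : 0 < discToSquareScale u v := discToSquareScale_pos hu0 hv0
  have hxu : x = discToSquareScale u v * u :=
    hx.trans (sign_mul_div_mul_sqrt_eq_discToSquareScale_mul u v)
  have hyv : y = discToSquareScale u v * v := by
    rw [hy, discToSquareScale_comm, ← sign_mul_div_mul_sqrt_eq_discToSquareScale_mul,
      mul_comm v u, add_comm (v ^ 2), mul_right_comm 4 (v ^ 2)]
  have hx0 : x ≠ 0 := hxu ▸ mul_ne_zero hscale.ne' hu0
  have hmap : fgSquareToDisc x y = (u, v) := by
    rw [hxu, hyv]
    exact fgSquareToDisc_mul_of_mem_squircle hscale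
      (discToSquareScale_mul_mem_squircle hu0 hv0 huv)
  exact ⟨fun h ↦ hx0 (congrArg Prod.fst h), congrArg Prod.fst hmap, congrArg Prod.snd hmap⟩

theorem four_mul_sq_mul_sq_le_of_mem_disc {u v : ℝ} (h : u ^ 2 + v ^ 2 ≤ 1) :
    4 * u ^ 2 * v ^ 2 ≤ u ^ 2 + v ^ 2 :=
  calc
    4 * u ^ 2 * v ^ 2 ≤ (u ^ 2 + v ^ 2) ^ 2 := four_mul_le_sq_add (u ^ 2) (v ^ 2)
    _ ≤ u ^ 2 + v ^ 2 := pow_le_of_le_one (by positivity) h two_ne_zero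

/-- The FG-Squircular square-to-disc map inverts the disc-to-square formulas. -/
theorem fg_squircular_right_inverse
    (u v x y : ℝ)
    (hd : u ^ 2 + v ^ 2 ≤ 1) (hu0 : u ≠ 0) (hv0 : v ≠ 0)
    (hx : x = Real.sign (u * v) / (v * Real.sqrt 2) *
      Real.sqrt (u ^ 2 + v ^ 2 -
        Real.sqrt ((u ^ 2 + v ^ 2) * (u ^ 2 + v ^ 2 - 4 * u ^ 2 * v ^ 2))))
    (hy : y = Real.sign (u * v) / (u * Real.sqrt 2) *
      Real.sqrt (u ^ 2 + v ^ 2 -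
        Real.sqrt ((u ^ 2 + v ^ 2) * (u ^ 2 + v ^ 2 - 4 * u ^ 2 * v ^ 2)))) :
    (x, y) ≠ (0, 0) ∧
    x * Real.sqrt (x ^ 2 + y ^ 2 - x ^ 2 * y ^ 2) / Real.sqrt (x ^ 2 + y ^ 2) = u ∧
    y * Real.sqrt (x ^ 2 + y ^ 2 - x ^ 2 * y ^ 2) / Real.sqrt (x ^ 2 + y ^ 2) = v :=
  fg_squircular_right_inverse_general u v x y (four_mul_sq_mul_sq_le_of_mem_disc hd) hu0 hv0 hx hy
end

section
/- Let (x,y) ∈ [-1,1] × [-1,1] and define u = x·√(1 − y²/2) and v = y·√(1 − x²/2). Then the trigonometrically derived inverse formulas recover (x,y): (1/2)·√(2 + u² − v² + 2√2·u) − (1/2)·√(2 + u² − v² − 2√2·u) = x and (1/2)·√(2 − u² + v² + 2√2·v) − (1/2)·√(2 − u² + v² − 2√2·v) = y. In particular all four radicands 2 ± (u² − v²) ± 2√2·u (resp. v) are nonnegative. -/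
/-!
The radicands are perfect squares: `u² - v² = x² - y²` and `√2 * u = x * √(2 - y²)`, so that
`2 + u² - v² ± 2 * √2 * u = (√(2 - y²) ± x)²`. On the disc `x² + y² ≤ 2` circumscribed about the
square, `|x| ≤ √(2 - y²)`, so both bases are nonnegative and the half-difference of the two roots
is `x`. Swapping the axes gives the formula for `y`.
-/

/-- The first coordinate `u` of the image of `(x, y)` under the Elliptical Grid map. As the map
commutes with swapping the axes, the second coordinate `v` is `ellipticalGridCoord y x`. -/
noncomputable def ellipticalGridCoord (x y : ℝ) : ℝ :=
  x * √(1 - y ^ 2 / 2)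

theorem half_sqrt_add_sq_sub_half_sqrt_sub_sq {t x : ℝ} (h : |x| ≤ t) :
    1 / 2 * √((t + x) ^ 2) - 1 / 2 * √((t - x) ^ 2) = x := by
  obtain ⟨neg_le, le⟩ := abs_le.mp h
  rw [Real.sqrt_sq (by linarith), Real.sqrt_sq (sub_nonneg.mpr le)]
  ring

theorem sqrt_two_mul_ellipticalGridCoord (x y : ℝ) :
    √2 * ellipticalGridCoord x y = x * √(2 - y ^ 2) := by
  rw [ellipticalGridCoord, mul_left_comm, ← Real.sqrt_mul zero_le_two, mul_sub, mul_one,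
    mul_div_cancel₀ _ two_ne_zero]

theorem ellipticalGridCoord_sq (x : ℝ) {y : ℝ} (hy : y ^ 2 ≤ 2) :
    ellipticalGridCoord x y ^ 2 = x ^ 2 * (1 - y ^ 2 / 2) := by
  rw [ellipticalGridCoord, mul_pow, Real.sq_sqrt (by linarith)]

theorem ellipticalGridCoord_sq_sub_sq {x y : ℝ} (hx : x ^ 2 ≤ 2) (hy : y ^ 2 ≤ 2) :
    ellipticalGridCoord x y ^ 2 - ellipticalGridCoord y x ^ 2 = x ^ 2 - y ^ 2 := by
  rw [ellipticalGridCoord_sq x hy, ellipticalGridCoord_sq y hx]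
  ring

theorem ellipticalGrid_radicand_add_eq_sq {x y : ℝ} (hx : x ^ 2 ≤ 2) (hy : y ^ 2 ≤ 2) :
    2 + ellipticalGridCoord x y ^ 2 - ellipticalGridCoord y x ^ 2
      + 2 * √2 * ellipticalGridCoord x y = (√(2 - y ^ 2) + x) ^ 2 := by
  linear_combination ellipticalGridCoord_sq_sub_sq hx hy
    + 2 * sqrt_two_mul_ellipticalGridCoord x y - Real.sq_sqrt (sub_nonneg.mpr hy)

theorem ellipticalGrid_radicand_sub_eq_sq {x y : ℝ} (hx : x ^ 2 ≤ 2) (hy : y ^ 2 ≤ 2) :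
    2 + ellipticalGridCoord x y ^ 2 - ellipticalGridCoord y x ^ 2
      - 2 * √2 * ellipticalGridCoord x y = (√(2 - y ^ 2) - x) ^ 2 := by
  linear_combination ellipticalGridCoord_sq_sub_sq hx hy
    - 2 * sqrt_two_mul_ellipticalGridCoord x y - Real.sq_sqrt (sub_nonneg.mpr hy)

theorem elliptical_grid_trig_inverse_general {x y u v : ℝ} (hxy : x ^ 2 + y ^ 2 ≤ 2)
    (hu : u = x * √(1 - y ^ 2 / 2)) (hv : v = y * √(1 - x ^ 2 / 2)) :
    0 ≤ 2 + u ^ 2 - v ^ 2 + 2 * √2 * u ∧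
    0 ≤ 2 + u ^ 2 - v ^ 2 - 2 * √2 * u ∧
    0 ≤ 2 - u ^ 2 + v ^ 2 + 2 * √2 * v ∧
    0 ≤ 2 - u ^ 2 + v ^ 2 - 2 * √2 * v ∧
    1 / 2 * √(2 + u ^ 2 - v ^ 2 + 2 * √2 * u) -
      1 / 2 * √(2 + u ^ 2 - v ^ 2 - 2 * √2 * u) = x ∧
    1 / 2 * √(2 - u ^ 2 + v ^ 2 + 2 * √2 * v) -
      1 / 2 * √(2 - u ^ 2 + v ^ 2 - 2 * √2 * v) = y := by
  have hx : x ^ 2 ≤ 2 := by linarith [sq_nonneg y]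
  have hy : y ^ 2 ≤ 2 := by linarith [sq_nonneg x]
  have abs_x_le : |x| ≤ √(2 - y ^ 2) := Real.abs_le_sqrt (by linarith)
  have abs_y_le : |y| ≤ √(2 - x ^ 2) := Real.abs_le_sqrt (by linarith)
  change u = ellipticalGridCoord x y at hu
  change v = ellipticalGridCoord y x at hv
  rw [sub_add_eq_add_sub 2 (u ^ 2) (v ^ 2), hu, hv,
    ellipticalGrid_radicand_add_eq_sq hx hy, ellipticalGrid_radicand_sub_eq_sq hx hy,
    ellipticalGrid_radicand_add_eq_sq hy hx, ellipticalGrid_radicand_sub_eq_sq hy hx]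
  exact ⟨sq_nonneg _, sq_nonneg _, sq_nonneg _, sq_nonneg _,
    half_sqrt_add_sq_sub_half_sqrt_sub_sq abs_x_le,
    half_sqrt_add_sq_sub_half_sqrt_sub_sq abs_y_le⟩

/-- The trigonometrically derived inverse formulas of the Elliptical Grid
map recover the point of the square. -/
theorem elliptical_grid_trig_inverse
    (x y u v : ℝ)
    (hx : x ∈ Set.Icc (-1 : ℝ) 1) (hy : y ∈ Set.Icc (-1 : ℝ) 1)
    (hu : u = x * Real.sqrt (1 - y ^ 2 / 2))
    (hv : v = y * Real.sqrt (1 - x ^ 2 / 2)) :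
    0 ≤ 2 + u ^ 2 - v ^ 2 + 2 * Real.sqrt 2 * u ∧
    0 ≤ 2 + u ^ 2 - v ^ 2 - 2 * Real.sqrt 2 * u ∧
    0 ≤ 2 - u ^ 2 + v ^ 2 + 2 * Real.sqrt 2 * v ∧
    0 ≤ 2 - u ^ 2 + v ^ 2 - 2 * Real.sqrt 2 * v ∧
    (1 / 2) * Real.sqrt (2 + u ^ 2 - v ^ 2 + 2 * Real.sqrt 2 * u) -
      (1 / 2) * Real.sqrt (2 + u ^ 2 - v ^ 2 - 2 * Real.sqrt 2 * u) = x ∧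
    (1 / 2) * Real.sqrt (2 - u ^ 2 + v ^ 2 + 2 * Real.sqrt 2 * v) -
      (1 / 2) * Real.sqrt (2 - u ^ 2 + v ^ 2 - 2 * Real.sqrt 2 * v) = y := by
  have sq_le_one {z : ℝ} (hz : z ∈ Set.Icc (-1 : ℝ) 1) : z ^ 2 ≤ 1 :=
    (sq_le_one_iff_abs_le_one z).mpr (abs_le.mpr hz)
  exact elliptical_grid_trig_inverse_general (by linarith [sq_le_one hx, sq_le_one hy]) hu hv
end

section
/- Let (x,y) ∈ [-1,1] × [-1,1] and define u = x·√(1 − y²/2) and v = y·√(1 − x²/2). Then the biquadratic-derived inverse formulas recover (x,y): sgn(u)/√2 · √(2 + u² − v² − √((2 + u² − v²)² − 8u²)) = x and sgn(v)/√2 · √(2 − u² + v² − √((2 − u² + v²)² − 8v²)) = y. In particular (2 + u² − v²)² − 8u² ≥ 0 and (2 − u² + v²)² − 8v² ≥ 0. -/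
/-- The discriminant of the quadratic satisfied by the square of the first coordinate of the
preimage of `(u, v)`. Swapping `u` and `v` gives the one for the second coordinate. -/
def ellipticalGridDiscrim (u v : ℝ) : ℝ :=
  (2 + u ^ 2 - v ^ 2) ^ 2 - 8 * u ^ 2

/-- The biquadratic formula for the first coordinate of the preimage of `(u, v)` under the
Elliptical Grid map. The second coordinate is `ellipticalGridInvCoord v u`. -/
noncomputable def ellipticalGridInvCoord (u v : ℝ) : ℝ :=
  Real.sign u / √2 * √(2 + u ^ 2 - v ^ 2 - √(ellipticalGridDiscrim u v))

theorem realSign_eq_coe_sign (x : ℝ) : Real.sign x = (SignType.sign x : ℝ) := by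
  rcases lt_trichotomy x 0 with hx | rfl | hx
  · rw [Real.sign_of_neg hx, sign_neg hx, SignType.coe_neg_one]
  · rw [Real.sign_zero, sign_zero, SignType.coe_zero]
  · rw [Real.sign_of_pos hx, sign_pos hx, SignType.coe_one]

section EllipticalGrid

variable {x y : ℝ}

theorem sq_ellipticalGridCoord (x : ℝ) (hy : y ^ 2 ≤ 2) :
    ellipticalGridCoord x y ^ 2 = x ^ 2 * (1 - y ^ 2 / 2) := by
  rw [ellipticalGridCoord, mul_pow, Real.sq_sqrt (by linarith)]

theorem two_add_sq_sub_sq_ellipticalGridCoord (hx : x ^ 2 ≤ 2) (hy : y ^ 2 ≤ 2) :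
    2 + ellipticalGridCoord x y ^ 2 - ellipticalGridCoord y x ^ 2 = x ^ 2 + (2 - y ^ 2) := by
  rw [sq_ellipticalGridCoord x hy, sq_ellipticalGridCoord y hx]
  ring

theorem ellipticalGridDiscrim_ellipticalGridCoord (hx : x ^ 2 ≤ 2) (hy : y ^ 2 ≤ 2) :
    ellipticalGridDiscrim (ellipticalGridCoord x y) (ellipticalGridCoord y x) =
      (2 - y ^ 2 - x ^ 2) ^ 2 := by
  rw [ellipticalGridDiscrim, two_add_sq_sub_sq_ellipticalGridCoord hx hy,
    sq_ellipticalGridCoord x hy]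
  ring

theorem ellipticalGridDiscrim_ellipticalGridCoord_nonneg (hx : x ^ 2 ≤ 2) (hy : y ^ 2 ≤ 2) :
    0 ≤ ellipticalGridDiscrim (ellipticalGridCoord x y) (ellipticalGridCoord y x) := by
  rw [ellipticalGridDiscrim_ellipticalGridCoord hx hy]
  exact sq_nonneg _

theorem sign_ellipticalGridCoord (h : x ^ 2 + y ^ 2 ≤ 2) :
    Real.sign (ellipticalGridCoord x y) = Real.sign x := by
  rcases eq_or_ne x 0 with rfl | hx
  · rw [ellipticalGridCoord, zero_mul]
  · have hx_sq : 0 < x ^ 2 := sq_pos_of_ne_zero hx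
    have hsqrt : 0 < √(1 - y ^ 2 / 2) := Real.sqrt_pos.2 (by linarith)
    rw [ellipticalGridCoord, realSign_eq_coe_sign, sign_mul, sign_pos hsqrt, mul_one,
      realSign_eq_coe_sign]

theorem ellipticalGridInvCoord_ellipticalGridCoord (h : x ^ 2 + y ^ 2 ≤ 2) :
    ellipticalGridInvCoord (ellipticalGridCoord x y) (ellipticalGridCoord y x) = x := by
  have hx : x ^ 2 ≤ 2 := by linarith [sq_nonneg y]
  have hy : y ^ 2 ≤ 2 := by linarith [sq_nonneg x]
  have smaller_root : x ^ 2 + (2 - y ^ 2) - (2 - y ^ 2 - x ^ 2) = 2 * x ^ 2 := by ring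
  calc ellipticalGridInvCoord (ellipticalGridCoord x y) (ellipticalGridCoord y x)
    _ = Real.sign x / √2 * √(2 * x ^ 2) := by
      rw [ellipticalGridInvCoord, sign_ellipticalGridCoord h,
        ellipticalGridDiscrim_ellipticalGridCoord hx hy, Real.sqrt_sq (by linarith),
        two_add_sq_sub_sq_ellipticalGridCoord hx hy, smaller_root]
    _ = Real.sign x * |x| := by
      rw [Real.sqrt_mul zero_le_two, Real.sqrt_sq_eq_abs]
      field_simp
    _ = x := by rw [realSign_eq_coe_sign, sign_mul_abs]

end EllipticalGrid

theorem elliptical_grid_biquadratic_inverse_general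
    (x y u v : ℝ) (h : x ^ 2 + y ^ 2 ≤ 2)
    (hu : u = x * Real.sqrt (1 - y ^ 2 / 2))
    (hv : v = y * Real.sqrt (1 - x ^ 2 / 2)) :
    (2 + u ^ 2 - v ^ 2) ^ 2 - 8 * u ^ 2 ≥ 0 ∧
    (2 - u ^ 2 + v ^ 2) ^ 2 - 8 * v ^ 2 ≥ 0 ∧
    Real.sign u / Real.sqrt 2 *
      Real.sqrt (2 + u ^ 2 - v ^ 2 -
        Real.sqrt ((2 + u ^ 2 - v ^ 2) ^ 2 - 8 * u ^ 2)) = x ∧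
    Real.sign v / Real.sqrt 2 *
      Real.sqrt (2 - u ^ 2 + v ^ 2 -
        Real.sqrt ((2 - u ^ 2 + v ^ 2) ^ 2 - 8 * v ^ 2)) = y := by
  have hx : x ^ 2 ≤ 2 := by linarith [sq_nonneg y]
  have hy : y ^ 2 ≤ 2 := by linarith [sq_nonneg x]
  have h_swap : y ^ 2 + x ^ 2 ≤ 2 := by rwa [add_comm]
  obtain rfl : u = ellipticalGridCoord x y := hu
  obtain rfl : v = ellipticalGridCoord y x := hv
  rw [sub_add_eq_add_sub]
  exact ⟨ellipticalGridDiscrim_ellipticalGridCoord_nonneg hx hy,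
    ellipticalGridDiscrim_ellipticalGridCoord_nonneg hy hx,
    ellipticalGridInvCoord_ellipticalGridCoord h,
    ellipticalGridInvCoord_ellipticalGridCoord h_swap⟩

/-- The biquadratic-derived inverse formulas of the Elliptical Grid map
recover the point of the square. -/
theorem elliptical_grid_biquadratic_inverse
    (x y u v : ℝ)
    (hx : x ∈ Set.Icc (-1 : ℝ) 1) (hy : y ∈ Set.Icc (-1 : ℝ) 1)
    (hu : u = x * Real.sqrt (1 - y ^ 2 / 2))
    (hv : v = y * Real.sqrt (1 - x ^ 2 / 2)) :
    (2 + u ^ 2 - v ^ 2) ^ 2 - 8 * u ^ 2 ≥ 0 ∧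
    (2 - u ^ 2 + v ^ 2) ^ 2 - 8 * v ^ 2 ≥ 0 ∧
    Real.sign u / Real.sqrt 2 *
      Real.sqrt (2 + u ^ 2 - v ^ 2 -
        Real.sqrt ((2 + u ^ 2 - v ^ 2) ^ 2 - 8 * u ^ 2)) = x ∧
    Real.sign v / Real.sqrt 2 *
      Real.sqrt (2 - u ^ 2 + v ^ 2 -
        Real.sqrt ((2 - u ^ 2 + v ^ 2) ^ 2 - 8 * v ^ 2)) = y := by
  have h : x ^ 2 + y ^ 2 ≤ 2 := by nlinarith [hx.1, hx.2, hy.1, hy.2]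
  exact elliptical_grid_biquadratic_inverse_general x y u v h hu hv
end

section
/- Let (u,v) ∈ ℝ² with u² + v² ≤ 1. Then the two forms of the Elliptical Grid disc-to-square inverse agree: (1/2)·√(2 + u² − v² + 2√2·u) − (1/2)·√(2 + u² − v² − 2√2·u) = sgn(u)/√2 · √(2 + u² − v² − √((2 + u² − v²)² − 8u²)), and the analogous identity with the roles of u and v (and of the signs of u², v²) exchanged: (1/2)·√(2 − u² + v² + 2√2·v) − (1/2)·√(2 − u² + v² − 2√2·v) = sgn(v)/√2 · √(2 − u² + v² − √((2 − u² + v²)² − 8v²)). In particular all radicands appearing are nonnegative on the disc. -/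
/-!
Put `A = 2 + u² - v²` and `c = 2√2 u`, so that `8u² = c²`. For `0 ≤ c ≤ A` the two forms agree
because `(√(A + c) - √(A - c))² = 2 (A - √(A² - c²))`, and both are odd in `c`. Since
`A ± c = (√2 ± u)² - v²`, the radicands are nonnegative on the whole square `|u| + |v| ≤ √2`
circumscribed about the disc.
-/

theorem abs_two_mul_mul_le_of_abs_add_abs_le {R : Type*} [CommRing R] [LinearOrder R]
    [IsStrictOrderedRing R] {s u v : R} (h : |u| + |v| ≤ s) :
    |2 * s * u| ≤ s ^ 2 + u ^ 2 - v ^ 2 := by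
  have hs : 0 ≤ s := (add_nonneg (abs_nonneg u) (abs_nonneg v)).trans h
  have hsq : v ^ 2 ≤ (s - |u|) ^ 2 :=
    sq_le_sq.mpr ((le_sub_iff_add_le'.mpr h).trans (le_abs_self _))
  calc |2 * s * u| = 2 * s * |u| := by rw [abs_mul, abs_of_nonneg (by positivity)]
    _ = s ^ 2 + |u| ^ 2 - (s - |u|) ^ 2 := by ring
    _ ≤ s ^ 2 + u ^ 2 - v ^ 2 := by rw [sq_abs]; gcongr

theorem abs_add_abs_le_sqrt_two_mul_sq_add_sq (u v : ℝ) : |u| + |v| ≤ √(2 * (u ^ 2 + v ^ 2)) :=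
  Real.le_sqrt_of_sq_le (by simpa only [sq_abs] using add_sq_le (a := |u|) (b := |v|))

theorem real_sign_mul_of_pos_left {a : ℝ} (ha : 0 < a) (x : ℝ) :
    Real.sign (a * x) = Real.sign x := by
  have hneg : a * x < 0 ↔ x < 0 := by simpa using mul_lt_mul_iff_right₀ ha (b := x) (c := 0)
  simp only [Real.sign, hneg, mul_pos_iff_of_pos_left ha]

theorem sqrt_sub_sqrt_eq_sqrt {a b : ℝ} (hb : 0 ≤ b) (hba : b ≤ a) :
    √a - √b = √(a + b - 2 * √(a * b)) := by
  have ha : 0 ≤ a := hb.trans hba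
  have hsq : a + b - 2 * √(a * b) = (√a - √b) ^ 2 := by
    rw [sub_sq, Real.sq_sqrt ha, Real.sq_sqrt hb, Real.sqrt_mul ha]
    ring
  rw [hsq, Real.sqrt_sq (sub_nonneg.mpr (Real.sqrt_le_sqrt hba))]

theorem half_sqrt_add_sub_half_sqrt_sub_of_nonneg {A c : ℝ} (hc : 0 ≤ c) (hcA : c ≤ A) :
    1 / 2 * √(A + c) - 1 / 2 * √(A - c) = 1 / √2 * √(A - √(A ^ 2 - c ^ 2)) := by
  have hdiff : √(A + c) - √(A - c) = √2 * √(A - √(A ^ 2 - c ^ 2)) := by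
    rw [sqrt_sub_sqrt_eq_sqrt (sub_nonneg.mpr hcA) (by linarith), ← Real.sqrt_mul zero_le_two]
    ring_nf
  rw [← mul_sub, hdiff, ← mul_assoc, one_div_mul_eq_div, Real.sqrt_div_self']

theorem half_sqrt_add_sub_half_sqrt_sub {A c : ℝ} (h : |c| ≤ A) :
    1 / 2 * √(A + c) - 1 / 2 * √(A - c) =
      Real.sign c / √2 * √(A - √(A ^ 2 - c ^ 2)) := by
  obtain hneg | rfl | hpos := lt_trichotomy c 0
  · have hodd := half_sqrt_add_sub_half_sqrt_sub_of_nonneg (neg_nonneg.mpr hneg.le)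
      ((neg_le_abs c).trans h)
    rw [sub_neg_eq_add, ← sub_eq_add_neg, neg_sq] at hodd
    rw [Real.sign_of_neg hneg, neg_div, neg_mul, ← hodd, neg_sub]
  · simp
  · rw [Real.sign_of_pos hpos]
    exact half_sqrt_add_sub_half_sqrt_sub_of_nonneg hpos.le ((le_abs_self c).trans h)

theorem two_mul_sqrt_two_mul_sq (u : ℝ) : (2 * √2 * u) ^ 2 = 8 * u ^ 2 := by
  rw [mul_pow, mul_pow, Real.sq_sqrt zero_le_two]
  norm_num

theorem elliptical_grid_inverse_coord_forms_agree {A u : ℝ} (h : |2 * √2 * u| ≤ A) :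
    0 ≤ A + 2 * √2 * u ∧ 0 ≤ A - 2 * √2 * u ∧ 0 ≤ A ^ 2 - 8 * u ^ 2 ∧
    1 / 2 * √(A + 2 * √2 * u) - 1 / 2 * √(A - 2 * √2 * u) =
      Real.sign u / √2 * √(A - √(A ^ 2 - 8 * u ^ 2)) := by
  obtain ⟨hlower, hupper⟩ := abs_le.mp h
  rw [← two_mul_sqrt_two_mul_sq, ← real_sign_mul_of_pos_left (by positivity : 0 < 2 * √2) u]
  exact ⟨neg_le_iff_add_nonneg'.mp hlower, sub_nonneg.mpr hupper,
    sub_nonneg.mpr (sq_le_sq' hlower hupper), half_sqrt_add_sub_half_sqrt_sub h⟩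

theorem elliptical_grid_inverse_forms_agree_general {u v : ℝ} (h : |u| + |v| ≤ √2) :
    0 ≤ 2 + u ^ 2 - v ^ 2 + 2 * √2 * u ∧
    0 ≤ 2 + u ^ 2 - v ^ 2 - 2 * √2 * u ∧
    0 ≤ 2 - u ^ 2 + v ^ 2 + 2 * √2 * v ∧
    0 ≤ 2 - u ^ 2 + v ^ 2 - 2 * √2 * v ∧
    0 ≤ (2 + u ^ 2 - v ^ 2) ^ 2 - 8 * u ^ 2 ∧
    0 ≤ (2 - u ^ 2 + v ^ 2) ^ 2 - 8 * v ^ 2 ∧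
    1 / 2 * √(2 + u ^ 2 - v ^ 2 + 2 * √2 * u) - 1 / 2 * √(2 + u ^ 2 - v ^ 2 - 2 * √2 * u) =
      Real.sign u / √2 * √(2 + u ^ 2 - v ^ 2 - √((2 + u ^ 2 - v ^ 2) ^ 2 - 8 * u ^ 2)) ∧
    1 / 2 * √(2 - u ^ 2 + v ^ 2 + 2 * √2 * v) - 1 / 2 * √(2 - u ^ 2 + v ^ 2 - 2 * √2 * v) =
      Real.sign v / √2 * √(2 - u ^ 2 + v ^ 2 - √((2 - u ^ 2 + v ^ 2) ^ 2 - 8 * v ^ 2)) := by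
  have hu : |2 * √2 * u| ≤ 2 + u ^ 2 - v ^ 2 := by
    simpa only [Real.sq_sqrt zero_le_two] using abs_two_mul_mul_le_of_abs_add_abs_le h
  have hv : |2 * √2 * v| ≤ 2 - u ^ 2 + v ^ 2 := by
    simpa only [Real.sq_sqrt zero_le_two, add_sub_right_comm] using
      abs_two_mul_mul_le_of_abs_add_abs_le ((add_comm |v| |u|).trans_le h)
  obtain ⟨hu_add, hu_sub, hu_disc, hu_forms⟩ := elliptical_grid_inverse_coord_forms_agree hu
  obtain ⟨hv_add, hv_sub, hv_disc, hv_forms⟩ := elliptical_grid_inverse_coord_forms_agree hv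
  exact ⟨hu_add, hu_sub, hv_add, hv_sub, hu_disc, hv_disc, hu_forms, hv_forms⟩

/-- On the closed unit disc, the trigonometric and biquadratic forms of the
Elliptical Grid disc-to-square inverse agree, and all radicands appearing
are nonnegative. -/
theorem elliptical_grid_inverse_forms_agree
    (u v : ℝ) (hd : u ^ 2 + v ^ 2 ≤ 1) :
    0 ≤ 2 + u ^ 2 - v ^ 2 + 2 * Real.sqrt 2 * u ∧
    0 ≤ 2 + u ^ 2 - v ^ 2 - 2 * Real.sqrt 2 * u ∧
    0 ≤ 2 - u ^ 2 + v ^ 2 + 2 * Real.sqrt 2 * v ∧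
    0 ≤ 2 - u ^ 2 + v ^ 2 - 2 * Real.sqrt 2 * v ∧
    0 ≤ (2 + u ^ 2 - v ^ 2) ^ 2 - 8 * u ^ 2 ∧
    0 ≤ (2 - u ^ 2 + v ^ 2) ^ 2 - 8 * v ^ 2 ∧
    (1 / 2) * Real.sqrt (2 + u ^ 2 - v ^ 2 + 2 * Real.sqrt 2 * u) -
      (1 / 2) * Real.sqrt (2 + u ^ 2 - v ^ 2 - 2 * Real.sqrt 2 * u) =
    Real.sign u / Real.sqrt 2 *
      Real.sqrt (2 + u ^ 2 - v ^ 2 -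
        Real.sqrt ((2 + u ^ 2 - v ^ 2) ^ 2 - 8 * u ^ 2)) ∧
    (1 / 2) * Real.sqrt (2 - u ^ 2 + v ^ 2 + 2 * Real.sqrt 2 * v) -
      (1 / 2) * Real.sqrt (2 - u ^ 2 + v ^ 2 - 2 * Real.sqrt 2 * v) =
    Real.sign v / Real.sqrt 2 *
      Real.sqrt (2 - u ^ 2 + v ^ 2 -
        Real.sqrt ((2 - u ^ 2 + v ^ 2) ^ 2 - 8 * v ^ 2)) :=
  elliptical_grid_inverse_forms_agree_general <|
    (abs_add_abs_le_sqrt_two_mul_sq_add_sq u v).trans (Real.sqrt_le_sqrt (by linarith))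
end

section
/- Let (x,y) ∈ [-1,1] × [-1,1] with (x,y) ≠ (0,0), and define (u,v) by the Simple Stretching square-to-disc map: u = sgn(x)·x²/√(x² + y²) and v = sgn(x)·x·y/√(x² + y²) when x² ≥ y², and u = sgn(y)·x·y/√(x² + y²) and v = sgn(y)·y²/√(x² + y²) when x² < y². Then the map is radial (u·y = v·x) and it sends the Euclidean norm of the image to the Chebyshev norm of the source: √(u² + v²) = max(|x|, |y|); in particular u² + v² ≤ 1. -/
/-!
Since `sgn(t) t = |t|`, both branches of the Simple Stretching map multiply `(x, y)` by the same
factor `max |x| |y| / √(x² + y²)`. A nonnegative multiple of `(x, y)` is radial, and multiplying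
the Euclidean norm of `(x, y)` by this factor leaves `max |x| |y|`.
-/

theorem real_sign_mul_self (t : ℝ) : Real.sign t * t = |t| := by
  rcases lt_trichotomy t 0 with neg | rfl | pos
  · rw [Real.sign_of_neg neg, abs_of_neg neg, neg_one_mul]
  · rw [mul_zero, abs_zero]
  · rw [Real.sign_of_pos pos, abs_of_pos pos, one_mul]

theorem sqrt_mul_sq_add_mul_sq (c x y : ℝ) :
    √((c * x) ^ 2 + (c * y) ^ 2) = |c| * √(x ^ 2 + y ^ 2) := by
  rw [mul_pow, mul_pow, ← mul_add, Real.sqrt_mul (sq_nonneg c), Real.sqrt_sq_eq_abs]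

/-- The ratio of the Chebyshev norm of `(x, y)` to its Euclidean norm, by which the Simple
Stretching map scales `(x, y)`. At the origin, where the ratio is undefined, it is `0`. -/
noncomputable def simpleStretchingFactor (x y : ℝ) : ℝ :=
  max |x| |y| / √(x ^ 2 + y ^ 2)

namespace simpleStretchingFactor

variable {x y : ℝ}

theorem nonneg (x y : ℝ) : 0 ≤ simpleStretchingFactor x y :=
  div_nonneg (le_max_of_le_left (abs_nonneg x)) (Real.sqrt_nonneg _)

theorem eq_of_sq_le_sq (h : y ^ 2 ≤ x ^ 2) :
    simpleStretchingFactor x y = Real.sign x * x / √(x ^ 2 + y ^ 2) := by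
  rw [simpleStretchingFactor, max_eq_left (sq_le_sq.mp h), real_sign_mul_self]

theorem eq_of_sq_lt_sq (h : x ^ 2 < y ^ 2) :
    simpleStretchingFactor x y = Real.sign y * y / √(x ^ 2 + y ^ 2) := by
  rw [simpleStretchingFactor, max_eq_right (sq_lt_sq.mp h).le, real_sign_mul_self]

theorem mul_fst_eq_ite (x y : ℝ) :
    simpleStretchingFactor x y * x =
      if x ^ 2 ≥ y ^ 2 then Real.sign x * x ^ 2 / √(x ^ 2 + y ^ 2)
      else Real.sign y * (x * y) / √(x ^ 2 + y ^ 2) := by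
  split_ifs with h
  · rw [eq_of_sq_le_sq h]
    ring
  · rw [eq_of_sq_lt_sq (not_le.mp h)]
    ring

theorem mul_snd_eq_ite (x y : ℝ) :
    simpleStretchingFactor x y * y =
      if x ^ 2 ≥ y ^ 2 then Real.sign x * (x * y) / √(x ^ 2 + y ^ 2)
      else Real.sign y * y ^ 2 / √(x ^ 2 + y ^ 2) := by
  split_ifs with h
  · rw [eq_of_sq_le_sq h]
    ring
  · rw [eq_of_sq_lt_sq (not_le.mp h)]
    ring

theorem mul_sqrt (hne : (x, y) ≠ (0, 0)) :
    simpleStretchingFactor x y * √(x ^ 2 + y ^ 2) = max |x| |y| := by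
  have sqrt_ne_zero : √(x ^ 2 + y ^ 2) ≠ 0 := by
    contrapose! hne
    rwa [Real.sqrt_eq_zero (by positivity),
      add_eq_zero_iff_of_nonneg (sq_nonneg x) (sq_nonneg y), sq_eq_zero_iff, sq_eq_zero_iff,
      ← Prod.mk.injEq] at hne
  exact div_mul_cancel₀ _ sqrt_ne_zero

theorem sqrt_mul_sq_add_mul_sq_eq_max (hne : (x, y) ≠ (0, 0)) :
    √((simpleStretchingFactor x y * x) ^ 2 + (simpleStretchingFactor x y * y) ^ 2) =
      max |x| |y| := by
  rw [sqrt_mul_sq_add_mul_sq, abs_of_nonneg (nonneg x y), mul_sqrt hne]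

end simpleStretchingFactor

theorem max_abs_le_one_iff_mem_Icc {x y : ℝ} :
    max |x| |y| ≤ 1 ↔ x ∈ Set.Icc (-1 : ℝ) 1 ∧ y ∈ Set.Icc (-1 : ℝ) 1 := by
  rw [max_le_iff, abs_le, abs_le, Set.mem_Icc, Set.mem_Icc]

theorem simple_stretching_radial_norm_general
    (x y u v : ℝ)
    (hne : (x, y) ≠ (0, 0))
    (hu : u = if x ^ 2 ≥ y ^ 2 then Real.sign x * x ^ 2 / Real.sqrt (x ^ 2 + y ^ 2)
              else Real.sign y * (x * y) / Real.sqrt (x ^ 2 + y ^ 2))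
    (hv : v = if x ^ 2 ≥ y ^ 2 then Real.sign x * (x * y) / Real.sqrt (x ^ 2 + y ^ 2)
              else Real.sign y * y ^ 2 / Real.sqrt (x ^ 2 + y ^ 2)) :
    u * y = v * x ∧ Real.sqrt (u ^ 2 + v ^ 2) = max |x| |y| ∧
      (u ^ 2 + v ^ 2 ≤ 1 ↔ x ∈ Set.Icc (-1 : ℝ) 1 ∧ y ∈ Set.Icc (-1 : ℝ) 1) := by
  rw [← simpleStretchingFactor.mul_fst_eq_ite] at hu
  rw [← simpleStretchingFactor.mul_snd_eq_ite] at hv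
  have norm_eq : √(u ^ 2 + v ^ 2) = max |x| |y| := by
    rw [hu, hv, simpleStretchingFactor.sqrt_mul_sq_add_mul_sq_eq_max hne]
  refine ⟨?_, norm_eq, ?_⟩
  · rw [hu, hv, mul_right_comm]
  · rw [← Real.sqrt_le_one, norm_eq, max_abs_le_one_iff_mem_Icc]

/-- The Simple Stretching square-to-disc map is radial and sends the
Euclidean norm of the image to the Chebyshev norm of the source. -/
theorem simple_stretching_radial_norm
    (x y u v : ℝ)
    (hx : x ∈ Set.Icc (-1 : ℝ) 1) (hy : y ∈ Set.Icc (-1 : ℝ) 1)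
    (hne : (x, y) ≠ (0, 0))
    (hu : u = if x ^ 2 ≥ y ^ 2 then Real.sign x * x ^ 2 / Real.sqrt (x ^ 2 + y ^ 2)
              else Real.sign y * (x * y) / Real.sqrt (x ^ 2 + y ^ 2))
    (hv : v = if x ^ 2 ≥ y ^ 2 then Real.sign x * (x * y) / Real.sqrt (x ^ 2 + y ^ 2)
              else Real.sign y * y ^ 2 / Real.sqrt (x ^ 2 + y ^ 2)) :
    u * y = v * x ∧ Real.sqrt (u ^ 2 + v ^ 2) = max |x| |y| ∧ u ^ 2 + v ^ 2 ≤ 1 := by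
  obtain ⟨radial, norm_eq, mem_disc_iff⟩ := simple_stretching_radial_norm_general x y u v hne hu hv
  exact ⟨radial, norm_eq, mem_disc_iff.mpr ⟨hx, hy⟩⟩
end

section
/- For all (x,y) ∈ [-1,1] × [-1,1] one has 0 ≤ x² + y² − x²y² ≤ 1, and equality x² + y² − x²y² = 1 holds if and only if |x| = 1 or |y| = 1. Consequently every point of the square lies on exactly one shrunken Fernández-Guasti squircle x² + y² − x²y² = t² with t = √(x² + y² − x²y²) ∈ [0,1], and the contour t = 1 is exactly the boundary of the square. -/
section Ring

variable {R : Type*} [Ring R]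

theorem add_sub_mul_eq_one_sub_mul_one_sub (a b : R) :
    a + b - a * b = 1 - (1 - a) * (1 - b) := by
  noncomm_ring

theorem add_sub_mul_mem_Icc [PartialOrder R] [IsOrderedRing R] {a b : R}
    (ha : a ∈ Set.Icc 0 1) (hb : b ∈ Set.Icc 0 1) : a + b - a * b ∈ Set.Icc 0 1 := by
  have ha' := Set.Icc.one_sub_mem ha
  have hb' := Set.Icc.one_sub_mem hb
  rw [add_sub_mul_eq_one_sub_mul_one_sub]
  exact Set.Icc.one_sub_mem ⟨mul_nonneg ha'.1 hb'.1, mul_le_one₀ ha'.2 hb'.1 hb'.2⟩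

theorem add_sub_mul_eq_one_iff [NoZeroDivisors R] {a b : R} :
    a + b - a * b = 1 ↔ a = 1 ∨ b = 1 := by
  rw [add_sub_mul_eq_one_sub_mul_one_sub, sub_eq_self, mul_eq_zero, sub_eq_zero, sub_eq_zero,
    eq_comm (a := a), eq_comm (a := b)]

variable [LinearOrder R] [IsStrictOrderedRing R] {a : R}

theorem sq_eq_one_iff_abs_eq_one : a ^ 2 = 1 ↔ |a| = 1 := by
  rw [← sq_abs, pow_eq_one_iff_of_nonneg (abs_nonneg a) two_ne_zero]

theorem sq_mem_Icc_zero_one_iff : a ^ 2 ∈ Set.Icc 0 1 ↔ a ∈ Set.Icc (-1) 1 := by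
  rw [Set.mem_Icc, Set.mem_Icc, and_iff_right (sq_nonneg a), sq_le_one_iff_abs_le_one, abs_le]

end Ring

theorem mem_Icc_and_eq_sq_iff_eq_sqrt {c r t : ℝ} (hc : 0 ≤ c) (hr : √c ≤ r) :
    t ∈ Set.Icc 0 r ∧ c = t ^ 2 ↔ t = √c := by
  constructor
  · rintro ⟨ht, rfl⟩
    exact (Real.sqrt_sq ht.1).symm
  · rintro rfl
    exact ⟨⟨Real.sqrt_nonneg c, hr⟩, (Real.sq_sqrt hc).symm⟩

/-- Every point of the square lies on exactly one shrunken FG-squircle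
x² + y² − x²y² = t² with t ∈ [0,1], and the contour t = 1 is exactly the
boundary of the square. -/
theorem squircular_continuum_of_square
    (x y : ℝ) (hx : x ∈ Set.Icc (-1 : ℝ) 1) (hy : y ∈ Set.Icc (-1 : ℝ) 1) :
    0 ≤ x ^ 2 + y ^ 2 - x ^ 2 * y ^ 2 ∧
    x ^ 2 + y ^ 2 - x ^ 2 * y ^ 2 ≤ 1 ∧
    (x ^ 2 + y ^ 2 - x ^ 2 * y ^ 2 = 1 ↔ |x| = 1 ∨ |y| = 1) ∧
    (∃! t : ℝ, t ∈ Set.Icc (0 : ℝ) 1 ∧ x ^ 2 + y ^ 2 - x ^ 2 * y ^ 2 = t ^ 2) ∧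
    Real.sqrt (x ^ 2 + y ^ 2 - x ^ 2 * y ^ 2) ∈ Set.Icc (0 : ℝ) 1 ∧
    x ^ 2 + y ^ 2 - x ^ 2 * y ^ 2 =
      (Real.sqrt (x ^ 2 + y ^ 2 - x ^ 2 * y ^ 2)) ^ 2 := by
  have hmem : x ^ 2 + y ^ 2 - x ^ 2 * y ^ 2 ∈ Set.Icc 0 1 :=
    add_sub_mul_mem_Icc (sq_mem_Icc_zero_one_iff.mpr hx) (sq_mem_Icc_zero_one_iff.mpr hy)
  have hboundary : x ^ 2 + y ^ 2 - x ^ 2 * y ^ 2 = 1 ↔ |x| = 1 ∨ |y| = 1 := by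
    rw [add_sub_mul_eq_one_iff, sq_eq_one_iff_abs_eq_one, sq_eq_one_iff_abs_eq_one]
  have hcontour (t : ℝ) : t ∈ Set.Icc 0 1 ∧ x ^ 2 + y ^ 2 - x ^ 2 * y ^ 2 = t ^ 2 ↔
      t = √(x ^ 2 + y ^ 2 - x ^ 2 * y ^ 2) :=
    mem_Icc_and_eq_sq_iff_eq_sqrt hmem.1 (Real.sqrt_le_one.mpr hmem.2)
  exact ⟨hmem.1, hmem.2, hboundary, ⟨_, (hcontour _).mpr rfl, fun t ↦ (hcontour t).mp⟩,
    (hcontour _).mpr rfl⟩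
end

section
/- Let q ∈ ℝ with 0 < q ≤ 1, and let (x,y) ∈ (-1,1) × (-1,1). Set a² = q + 1 − q·y² and b² = q + 1 − q·x², and define the squelched Elliptical Grid images u = x·√((y²·a² − a²·b²)/(x²y² − a²·b²)) and v = y·√((x²·b² − a²·b²)/(x²y² − a²·b²)) (both ratios under the square roots are nonnegative since x²y² < a²b²). Then the squelched inverse formulas recover (x,y): sgn(u)/√(2q) · √(q + 1 + q·u² − v² − √((q + 1 + q·u² − v²)² − 4q(q + 1)u²)) = x and sgn(v)/√(2q) · √(q + 1 − u² + q·v² − √((q + 1 − u² + q·v²)² − 4q(q + 1)v²)) = y, the inner radicands being nonnegative. -/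
/-!
Cleared of denominators, the equation `u ^ 2 / x ^ 2 + v ^ 2 / b ^ 2 = 1` of the vertical ellipse
says that `t = x ^ 2` solves `q * t ^ 2 - (q + 1 + q * u ^ 2 - v ^ 2) * t + (q + 1) * u ^ 2 = 0`.
The roots of this quadratic are `x ^ 2` and `(q + 1) * R / q`, where `u = x * √R`. The inverse
formula picks the smaller root, which is `x ^ 2` precisely when `q * x ^ 2 ≤ (q + 1) * R`; for
`q ≤ 1` completing the square in `x ^ 2` shows that this holds. The formula for `y` follows by the
symmetry exchanging `(x, u)` with `(y, v)`.
-/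

namespace SquelchedGrid

/-- The squared semi-axis `q + 1 - q * t ^ 2`: this is `b ^ 2` for the vertical ellipse at `t = x`
and `a ^ 2` for the horizontal one at `t = y`. -/
def semiAxisSq (q t : ℝ) : ℝ := q + 1 - q * t ^ 2

/-- The square `R` of the factor in `u = x * √R`. By symmetry `stretchSq q y x` is the square of the
factor of `v`. Both are junk at the corners `x ^ 2 = y ^ 2 = 1`, where they read `0 / 0`. -/
noncomputable def stretchSq (q x y : ℝ) : ℝ :=
  (y ^ 2 * semiAxisSq q y - semiAxisSq q x * semiAxisSq q y) /
    (x ^ 2 * y ^ 2 - semiAxisSq q x * semiAxisSq q y)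

/-- The first coordinate `u` of the image of `(x, y)`. The second one is `gridCoord q y x`. -/
noncomputable def gridCoord (q x y : ℝ) : ℝ := x * √(stretchSq q x y)

/-- The first coordinate of the claimed inverse at `(u, v)`. The second one is
`inverseCoord q v u`. -/
noncomputable def inverseCoord (q u v : ℝ) : ℝ :=
  Real.sign u / √(2 * q) *
    √(q + 1 + q * u ^ 2 - v ^ 2 - √((q + 1 + q * u ^ 2 - v ^ 2) ^ 2 - 4 * q * (q + 1) * u ^ 2))

theorem sign_mul_of_pos_right {r : ℝ} (x : ℝ) (hr : 0 < r) : (x * r).sign = x.sign := by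
  rcases lt_trichotomy x 0 with hx | rfl | hx
  · rw [Real.sign_of_neg hx, Real.sign_of_neg (mul_neg_of_neg_of_pos hx hr)]
  · rw [zero_mul]
  · rw [Real.sign_of_pos hx, Real.sign_of_pos (mul_pos hx hr)]

theorem sign_mul_abs (x : ℝ) : x.sign * |x| = x := by
  rcases lt_trichotomy x 0 with hx | rfl | hx
  · rw [Real.sign_of_neg hx, abs_of_neg hx, neg_one_mul, neg_neg]
  · rw [abs_zero, mul_zero]
  · rw [Real.sign_of_pos hx, abs_of_pos hx, one_mul]

section Inverse

variable {q x u v : ℝ}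

theorem discrim_eq_sq_of_ellipse
    (hellipse : semiAxisSq q x * u ^ 2 + x ^ 2 * v ^ 2 = x ^ 2 * semiAxisSq q x) :
    (q + 1 + q * u ^ 2 - v ^ 2) ^ 2 - 4 * q * (q + 1) * u ^ 2 =
      (q + 1 + q * u ^ 2 - v ^ 2 - 2 * q * x ^ 2) ^ 2 := by
  have hroot :
      q * (x ^ 2 * x ^ 2) + -(q + 1 + q * u ^ 2 - v ^ 2) * x ^ 2 + (q + 1) * u ^ 2 = 0 := by
    unfold semiAxisSq at hellipse
    linear_combination hellipse
  have hdiscrim := discrim_eq_sq_of_quadratic_eq_zero hroot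
  rw [discrim] at hdiscrim
  linear_combination hdiscrim

theorem inverseCoord_eq_of_ellipse (hq : 0 < q)
    (hellipse : semiAxisSq q x * u ^ 2 + x ^ 2 * v ^ 2 = x ^ 2 * semiAxisSq q x)
    (hle : 2 * q * x ^ 2 ≤ q + 1 + q * u ^ 2 - v ^ 2) (hsign : u.sign = x.sign) :
    inverseCoord q u v = x := by
  have hsqrt : √(2 * q) ≠ 0 := by positivity
  calc inverseCoord q u v = x.sign / √(2 * q) * √(2 * q * x ^ 2) := by
        rw [inverseCoord, discrim_eq_sq_of_ellipse hellipse, Real.sqrt_sq (sub_nonneg.mpr hle),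
          sub_sub_cancel, hsign]
    _ = x.sign * |x| := by
        rw [Real.sqrt_mul (x := 2 * q) (by positivity), Real.sqrt_sq_eq_abs, ← mul_assoc,
          div_mul_cancel₀ _ hsqrt]
    _ = x := sign_mul_abs x

end Inverse

section Stretch

variable {q x y : ℝ}

theorem one_le_semiAxisSq (hq : 0 ≤ q) (hx : x ^ 2 ≤ 1) : 1 ≤ semiAxisSq q x := by
  unfold semiAxisSq
  linarith [mul_le_of_le_one_right hq hx]

theorem sq_mul_sq_lt_semiAxisSq_mul (hq : 0 ≤ q) (hx : x ^ 2 ≤ 1) (hy : y ^ 2 ≤ 1)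
    (hxy : x ^ 2 * y ^ 2 < 1) : x ^ 2 * y ^ 2 < semiAxisSq q x * semiAxisSq q y :=
  hxy.trans_le (one_le_mul_of_one_le_of_one_le (one_le_semiAxisSq hq hx) (one_le_semiAxisSq hq hy))

theorem sq_lt_semiAxisSq (hq : 0 < q) (hx : x ^ 2 ≤ 1) (hy : y ^ 2 ≤ 1)
    (hxy : x ^ 2 * y ^ 2 < 1) : y ^ 2 < semiAxisSq q x := by
  rcases hy.lt_or_eq with hy_lt | hy_eq
  · exact hy_lt.trans_le (one_le_semiAxisSq hq.le hx)
  · rw [hy_eq, mul_one] at hxy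
    unfold semiAxisSq
    linarith [mul_lt_of_lt_one_right hq hxy]

theorem stretchSq_eq (q x y : ℝ) : stretchSq q x y =
    semiAxisSq q y * (semiAxisSq q x - y ^ 2) /
      (semiAxisSq q x * semiAxisSq q y - x ^ 2 * y ^ 2) := by
  rw [stretchSq, ← neg_div_neg_eq]
  congr 1 <;> ring

theorem stretchSq_swap (q x y : ℝ) : stretchSq q y x =
    (x ^ 2 * semiAxisSq q x - semiAxisSq q x * semiAxisSq q y) /
      (x ^ 2 * y ^ 2 - semiAxisSq q x * semiAxisSq q y) := by
  rw [stretchSq, mul_comm (y ^ 2), mul_comm (semiAxisSq q y)]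

theorem stretchSq_pos (hq : 0 < q) (hx : x ^ 2 ≤ 1) (hy : y ^ 2 ≤ 1)
    (hxy : x ^ 2 * y ^ 2 < 1) : 0 < stretchSq q x y := by
  rw [stretchSq_eq]
  exact div_pos
    (mul_pos (one_pos.trans_le (one_le_semiAxisSq hq.le hy))
      (sub_pos.mpr (sq_lt_semiAxisSq hq hx hy hxy)))
    (sub_pos.mpr (sq_mul_sq_lt_semiAxisSq_mul hq.le hx hy hxy))

theorem semiAxisSq_mul_stretchSq_add (h : x ^ 2 * y ^ 2 ≠ semiAxisSq q x * semiAxisSq q y) :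
    semiAxisSq q x * stretchSq q x y + y ^ 2 * stretchSq q y x = semiAxisSq q x := by
  have hden : x ^ 2 * y ^ 2 - semiAxisSq q x * semiAxisSq q y ≠ 0 := sub_ne_zero.mpr h
  rw [stretchSq_swap q x y, stretchSq, mul_div_assoc', mul_div_assoc', ← add_div, div_eq_iff hden]
  ring

theorem mul_sq_le_mul_stretchSq (hq : 0 < q) (hq1 : q ≤ 1) (hy : y ^ 2 ≤ 1)
    (h : x ^ 2 * y ^ 2 < semiAxisSq q x * semiAxisSq q y) :
    q * x ^ 2 ≤ (q + 1) * stretchSq q x y := by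
  set c := q + (1 - q) * y ^ 2 with hc
  have hc_pos : 0 < c := add_pos_of_pos_of_nonneg hq (mul_nonneg (sub_nonneg.mpr hq1) (sq_nonneg y))
  have ha : 0 ≤ semiAxisSq q y := zero_le_one.trans (one_le_semiAxisSq hq.le hy)
  have hsquare : c * ((q + 1) * (semiAxisSq q y * (semiAxisSq q x - y ^ 2)) -
      q * x ^ 2 * (semiAxisSq q x * semiAxisSq q y - x ^ 2 * y ^ 2)) =
      (q + 1) * (q * (c * x ^ 2 - semiAxisSq q y) ^ 2 +
        semiAxisSq q y * (1 - q) * y ^ 2 * (1 - y ^ 2)) := by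
    simp only [hc, semiAxisSq]
    ring
  have hnonneg : 0 ≤ (q + 1) * (q * (c * x ^ 2 - semiAxisSq q y) ^ 2 +
      semiAxisSq q y * (1 - q) * y ^ 2 * (1 - y ^ 2)) := by
    have := sub_nonneg.mpr hq1
    have := sub_nonneg.mpr hy
    positivity
  rw [stretchSq_eq, ← mul_div_assoc, le_div_iff₀ (sub_pos.mpr h), ← sub_nonneg]
  exact nonneg_of_mul_nonneg_right (hsquare ▸ hnonneg) hc_pos

end Stretch

section GridMap

variable {q x y : ℝ}

theorem gridCoord_sq (hq : 0 < q) (hx : x ^ 2 ≤ 1) (hy : y ^ 2 ≤ 1) (hxy : x ^ 2 * y ^ 2 < 1) :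
    gridCoord q x y ^ 2 = x ^ 2 * stretchSq q x y := by
  rw [gridCoord, mul_pow, Real.sq_sqrt (stretchSq_pos hq hx hy hxy).le]

theorem gridCoord_sq_swap (hq : 0 < q) (hx : x ^ 2 ≤ 1) (hy : y ^ 2 ≤ 1)
    (hxy : x ^ 2 * y ^ 2 < 1) :
    gridCoord q y x ^ 2 = semiAxisSq q x * (1 - stretchSq q x y) := by
  rw [gridCoord_sq hq hy hx (by rwa [mul_comm])]
  linear_combination
    semiAxisSq_mul_stretchSq_add (sq_mul_sq_lt_semiAxisSq_mul hq.le hx hy hxy).ne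

theorem gridCoord_ellipse (hq : 0 < q) (hx : x ^ 2 ≤ 1) (hy : y ^ 2 ≤ 1)
    (hxy : x ^ 2 * y ^ 2 < 1) :
    semiAxisSq q x * gridCoord q x y ^ 2 + x ^ 2 * gridCoord q y x ^ 2 =
      x ^ 2 * semiAxisSq q x := by
  rw [gridCoord_sq hq hx hy hxy, gridCoord_sq_swap hq hx hy hxy]
  ring

theorem two_mul_sq_le_root_sum (hq : 0 < q) (hq1 : q ≤ 1) (hx : x ^ 2 ≤ 1) (hy : y ^ 2 ≤ 1)
    (hxy : x ^ 2 * y ^ 2 < 1) :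
    2 * q * x ^ 2 ≤ q + 1 + q * gridCoord q x y ^ 2 - gridCoord q y x ^ 2 := by
  have hroots_le := mul_sq_le_mul_stretchSq hq hq1 hy (sq_mul_sq_lt_semiAxisSq_mul hq.le hx hy hxy)
  calc 2 * q * x ^ 2 ≤ q * x ^ 2 + (q + 1) * stretchSq q x y := by linarith
    _ = q + 1 + q * gridCoord q x y ^ 2 - gridCoord q y x ^ 2 := by
        rw [gridCoord_sq hq hx hy hxy, gridCoord_sq_swap hq hx hy hxy, semiAxisSq]
        ring

theorem discrim_gridCoord_nonneg (hq : 0 < q) (hx : x ^ 2 ≤ 1) (hy : y ^ 2 ≤ 1)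
    (hxy : x ^ 2 * y ^ 2 < 1) :
    0 ≤ (q + 1 + q * gridCoord q x y ^ 2 - gridCoord q y x ^ 2) ^ 2 -
      4 * q * (q + 1) * gridCoord q x y ^ 2 := by
  rw [discrim_eq_sq_of_ellipse (gridCoord_ellipse hq hx hy hxy)]
  exact sq_nonneg _

theorem inverseCoord_gridCoord (hq : 0 < q) (hq1 : q ≤ 1) (hx : x ^ 2 ≤ 1) (hy : y ^ 2 ≤ 1)
    (hxy : x ^ 2 * y ^ 2 < 1) : inverseCoord q (gridCoord q x y) (gridCoord q y x) = x :=
  inverseCoord_eq_of_ellipse hq (gridCoord_ellipse hq hx hy hxy)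
    (two_mul_sq_le_root_sum hq hq1 hx hy hxy)
    (sign_mul_of_pos_right x (Real.sqrt_pos.mpr (stretchSq_pos hq hx hy hxy)))

end GridMap

end SquelchedGrid

open SquelchedGrid in
theorem squelched_elliptical_grid_inverse_general {q x y u v : ℝ}
    (hq : 0 < q) (hq1 : q ≤ 1)
    (hx : x ∈ Set.Icc (-1 : ℝ) 1) (hy : y ∈ Set.Icc (-1 : ℝ) 1) (hcorner : |x| < 1 ∨ |y| < 1)
    (hu : u = x * √((y ^ 2 * (q + 1 - q * y ^ 2) - (q + 1 - q * x ^ 2) * (q + 1 - q * y ^ 2)) /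
        (x ^ 2 * y ^ 2 - (q + 1 - q * x ^ 2) * (q + 1 - q * y ^ 2))))
    (hv : v = y * √((x ^ 2 * (q + 1 - q * x ^ 2) - (q + 1 - q * x ^ 2) * (q + 1 - q * y ^ 2)) /
        (x ^ 2 * y ^ 2 - (q + 1 - q * x ^ 2) * (q + 1 - q * y ^ 2)))) :
    x ^ 2 * y ^ 2 < (q + 1 - q * x ^ 2) * (q + 1 - q * y ^ 2) ∧
    0 ≤ (y ^ 2 * (q + 1 - q * y ^ 2) - (q + 1 - q * x ^ 2) * (q + 1 - q * y ^ 2)) /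
        (x ^ 2 * y ^ 2 - (q + 1 - q * x ^ 2) * (q + 1 - q * y ^ 2)) ∧
    0 ≤ (x ^ 2 * (q + 1 - q * x ^ 2) - (q + 1 - q * x ^ 2) * (q + 1 - q * y ^ 2)) /
        (x ^ 2 * y ^ 2 - (q + 1 - q * x ^ 2) * (q + 1 - q * y ^ 2)) ∧
    0 ≤ (q + 1 + q * u ^ 2 - v ^ 2) ^ 2 - 4 * q * (q + 1) * u ^ 2 ∧
    0 ≤ (q + 1 - u ^ 2 + q * v ^ 2) ^ 2 - 4 * q * (q + 1) * v ^ 2 ∧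
    Real.sign u / √(2 * q) *
      √(q + 1 + q * u ^ 2 - v ^ 2 -
        √((q + 1 + q * u ^ 2 - v ^ 2) ^ 2 - 4 * q * (q + 1) * u ^ 2)) = x ∧
    Real.sign v / √(2 * q) *
      √(q + 1 - u ^ 2 + q * v ^ 2 -
        √((q + 1 - u ^ 2 + q * v ^ 2) ^ 2 - 4 * q * (q + 1) * v ^ 2)) = y := by
  have hx2 : x ^ 2 ≤ 1 := (sq_le_one_iff_abs_le_one x).mpr (abs_le.mpr hx)
  have hy2 : y ^ 2 ≤ 1 := (sq_le_one_iff_abs_le_one y).mpr (abs_le.mpr hy)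
  have hxy2 : x ^ 2 * y ^ 2 < 1 := by
    rcases hcorner with hx1 | hy1
    · exact mul_lt_one_of_nonneg_of_lt_one_left (sq_nonneg x)
        ((sq_lt_one_iff_abs_lt_one x).mpr hx1) hy2
    · exact mul_lt_one_of_nonneg_of_lt_one_right hx2 (sq_nonneg y)
        ((sq_lt_one_iff_abs_lt_one y).mpr hy1)
  have hyx2 : y ^ 2 * x ^ 2 < 1 := by rwa [mul_comm]
  have hv_radicand : q + 1 - u ^ 2 + q * v ^ 2 = q + 1 + q * v ^ 2 - u ^ 2 := by ring
  have hstretch_nonneg : 0 ≤ stretchSq q y x := (stretchSq_pos hq hy2 hx2 hyx2).le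
  obtain rfl : u = gridCoord q x y := hu
  obtain rfl : v = gridCoord q y x := by
    rw [gridCoord, stretchSq_swap]
    exact hv
  rw [stretchSq_swap] at hstretch_nonneg
  rw [hv_radicand]
  exact ⟨sq_mul_sq_lt_semiAxisSq_mul hq.le hx2 hy2 hxy2,
    (stretchSq_pos hq hx2 hy2 hxy2).le, hstretch_nonneg,
    discrim_gridCoord_nonneg hq hx2 hy2 hxy2, discrim_gridCoord_nonneg hq hy2 hx2 hyx2,
    inverseCoord_gridCoord hq hq1 hx2 hy2 hxy2, inverseCoord_gridCoord hq hq1 hy2 hx2 hyx2⟩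

/-- The squelched Elliptical Grid inverse formulas recover the point of the
open square. -/
theorem squelched_elliptical_grid_inverse
    (q x y u v : ℝ)
    (hq : 0 < q) (hq1 : q ≤ 1)
    (hx : x ∈ Set.Ioo (-1 : ℝ) 1) (hy : y ∈ Set.Ioo (-1 : ℝ) 1)
    (hu : u = x * Real.sqrt
      ((y ^ 2 * (q + 1 - q * y ^ 2) - (q + 1 - q * x ^ 2) * (q + 1 - q * y ^ 2)) /
        (x ^ 2 * y ^ 2 - (q + 1 - q * x ^ 2) * (q + 1 - q * y ^ 2))))
    (hv : v = y * Real.sqrt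
      ((x ^ 2 * (q + 1 - q * x ^ 2) - (q + 1 - q * x ^ 2) * (q + 1 - q * y ^ 2)) /
        (x ^ 2 * y ^ 2 - (q + 1 - q * x ^ 2) * (q + 1 - q * y ^ 2)))) :
    x ^ 2 * y ^ 2 < (q + 1 - q * x ^ 2) * (q + 1 - q * y ^ 2) ∧
    0 ≤ (y ^ 2 * (q + 1 - q * y ^ 2) - (q + 1 - q * x ^ 2) * (q + 1 - q * y ^ 2)) /
        (x ^ 2 * y ^ 2 - (q + 1 - q * x ^ 2) * (q + 1 - q * y ^ 2)) ∧
    0 ≤ (x ^ 2 * (q + 1 - q * x ^ 2) - (q + 1 - q * x ^ 2) * (q + 1 - q * y ^ 2)) /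
        (x ^ 2 * y ^ 2 - (q + 1 - q * x ^ 2) * (q + 1 - q * y ^ 2)) ∧
    0 ≤ (q + 1 + q * u ^ 2 - v ^ 2) ^ 2 - 4 * q * (q + 1) * u ^ 2 ∧
    0 ≤ (q + 1 - u ^ 2 + q * v ^ 2) ^ 2 - 4 * q * (q + 1) * v ^ 2 ∧
    Real.sign u / Real.sqrt (2 * q) *
      Real.sqrt (q + 1 + q * u ^ 2 - v ^ 2 -
        Real.sqrt ((q + 1 + q * u ^ 2 - v ^ 2) ^ 2 - 4 * q * (q + 1) * u ^ 2)) = x ∧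
    Real.sign v / Real.sqrt (2 * q) *
      Real.sqrt (q + 1 - u ^ 2 + q * v ^ 2 -
        Real.sqrt ((q + 1 - u ^ 2 + q * v ^ 2) ^ 2 - 4 * q * (q + 1) * v ^ 2)) = y :=
  squelched_elliptical_grid_inverse_general hq hq1 (Set.Ioo_subset_Icc_self hx)
    (Set.Ioo_subset_Icc_self hy) (Or.inl (abs_lt.mpr hx)) hu hv
end

section
/- The constant K_e = ∫₀^{π/2} dt/√(1 − (1/2)sin²t) (the complete Legendre elliptic integral of the first kind with modulus 1/√2) equals L_e/√2, where L_e = Γ(1/4)²/(2√(2π)) is the lemniscate constant; equivalently, ∫₀^{π/2} dt/√(1 − (1/2)sin²t) = Γ(1/4)²/(4√π). -/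
/-!
The substitution `x = cos t` turns Legendre's integral of modulus `k = 1/√2` into
`√2 * ∫₀¹ dx / √(1 - x⁴)`, because `(1 - x²) (1 - k² + k² x²) = (1 - x⁴) / 2`.
The substitution `y = x⁴` turns the latter into the Beta value `B(1/4, 1/2) / 4`, and Euler's
reflection formula eliminates `Γ(3/4)` from it.
-/

section

open Real Set ProbabilityTheory

theorem integral_rpow_mul_one_sub_rpow {u v : ℝ} (hu : 0 < u) (hv : 0 < v) :
    ∫ x in (0 : ℝ)..1, x ^ (u - 1) * (1 - x) ^ (v - 1) = beta u v := by
  rw [beta_eq_betaIntegralReal u v hu hv, Complex.betaIntegral,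
    ← Complex.ofReal_re (∫ _ in _.._, _), ← intervalIntegral.integral_ofReal]
  congr 1
  refine intervalIntegral.integral_congr fun x hx ↦ ?_
  rw [uIcc_of_le zero_le_one] at hx
  simp only [Complex.ofReal_mul, Complex.ofReal_cpow hx.1, Complex.ofReal_cpow (sub_nonneg.2 hx.2),
    Complex.ofReal_sub, Complex.ofReal_one]

theorem integral_rpow_mul_one_sub_rpow_rpow {a p q : ℝ} (ha : 0 < a) (hp : 0 < p) (hq : 0 < q) :
    ∫ x in (0 : ℝ)..1, x ^ (p - 1) * (1 - x ^ a) ^ (q - 1) = beta (p / a) q / a := by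
  have pos_of_mem {x : ℝ} (hx : x ∈ Ioo (min 0 1) (max 0 1)) : 0 < x := by simpa using hx.1
  have substitution := intervalIntegral.integral_comp_mul_deriv_of_deriv_nonneg
    (a := 0) (b := 1) (f := fun x ↦ x ^ a) (f' := fun x ↦ a * x ^ (a - 1))
    (g := fun y ↦ y ^ (p / a - 1) * (1 - y) ^ (q - 1))
    (continuous_rpow_const ha.le).continuousOn
    (fun x hx ↦ hasDerivAt_rpow_const (.inl (pos_of_mem hx).ne'))
    (fun x hx ↦ mul_nonneg ha.le (rpow_nonneg (pos_of_mem hx).le _))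
  rw [zero_rpow ha.ne', one_rpow, integral_rpow_mul_one_sub_rpow (div_pos hp ha) hq] at substitution
  rw [← substitution, ← intervalIntegral.integral_div]
  refine intervalIntegral.integral_congr_Ioo_of_le zero_le_one fun x ⟨hx, _⟩ ↦ ?_
  have rpow_eq : (x ^ a) ^ (p / a - 1) * x ^ (a - 1) = x ^ (p - 1) := by
    rw [← rpow_mul hx.le, ← rpow_add hx]
    congr 1
    field_simp
    ring
  simp only [Function.comp_apply, ← rpow_eq]
  field_simp

theorem integral_one_div_sqrt_one_sub_rpow {a : ℝ} (ha : 0 < a) :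
    ∫ x in (0 : ℝ)..1, 1 / √(1 - x ^ a) = beta (1 / a) (1 / 2) / a := by
  rw [← integral_rpow_mul_one_sub_rpow_rpow ha one_pos one_half_pos]
  refine intervalIntegral.integral_congr fun x hx ↦ ?_
  rw [uIcc_of_le zero_le_one] at hx
  have one_sub_nonneg : 0 ≤ 1 - x ^ a := sub_nonneg.2 (rpow_le_one hx.1 hx.2 ha.le)
  norm_num [sqrt_eq_rpow, ← rpow_neg one_sub_nonneg]

theorem Gamma_one_div_four_mul_Gamma_three_div_four :
    Gamma (1 / 4) * Gamma (3 / 4) = √2 * π := by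
  have reflection := Gamma_mul_Gamma_one_sub (1 / 4)
  rw [show (1 : ℝ) - 1 / 4 = 3 / 4 by norm_num, mul_one_div, sin_pi_div_four] at reflection
  rw [reflection]
  field_simp
  simp

theorem integral_one_div_sqrt_one_sub_pow_four :
    ∫ x in (0 : ℝ)..1, 1 / √(1 - x ^ 4) = Gamma (1 / 4) ^ 2 / (4 * √(2 * π)) := by
  have Gamma_three_div_four : Gamma (3 / 4) = √2 * π / Gamma (1 / 4) :=
    eq_div_of_mul_eq (Gamma_pos_of_pos (by norm_num)).ne'
      (by rw [mul_comm, Gamma_one_div_four_mul_Gamma_three_div_four])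
  calc ∫ x in (0 : ℝ)..1, 1 / √(1 - x ^ 4)
    _ = ∫ x in (0 : ℝ)..1, 1 / √(1 - x ^ (4 : ℝ)) := by norm_cast
    _ = Gamma (1 / 4) * √π / Gamma (3 / 4) / 4 := by
      rw [integral_one_div_sqrt_one_sub_rpow four_pos, beta, Gamma_one_half_eq]
      norm_num
    _ = Gamma (1 / 4) ^ 2 / (4 * √(2 * π)) := by
      rw [Gamma_three_div_four, sqrt_mul zero_le_two]
      field_simp
      rw [sq_sqrt pi_pos.le]

theorem sin_pos_of_mem_uIoo {a b t : ℝ} (ha : a ∈ Icc 0 π) (hb : b ∈ Icc 0 π)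
    (ht : t ∈ uIoo a b) : 0 < sin t :=
  sin_pos_of_mem_Ioo ⟨(le_min ha.1 hb.1).trans_lt ht.1, ht.2.trans_le (max_le ha.2 hb.2)⟩

theorem integral_comp_cos_mul_sin {a b : ℝ} (ha : a ∈ Icc 0 π) (hb : b ∈ Icc 0 π) (g : ℝ → ℝ) :
    ∫ t in a..b, g (cos t) * sin t = ∫ x in cos b..cos a, g x := by
  rw [intervalIntegral.integral_symm (cos a),
    ← intervalIntegral.integral_comp_mul_deriv_of_deriv_nonpos continuous_cos.continuousOn
      (fun t _ ↦ hasDerivAt_cos t)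
      (fun t ht ↦ neg_nonpos.2 (sin_pos_of_mem_uIoo ha hb ht).le)]
  simp only [Function.comp_apply, mul_neg, intervalIntegral.integral_neg, neg_neg]

theorem integral_one_div_sqrt_one_sub_mul_sin_sq {a b : ℝ} (ha : a ∈ Icc 0 π) (hb : b ∈ Icc 0 π)
    (m : ℝ) :
    ∫ t in a..b, 1 / √(1 - m * sin t ^ 2) =
      ∫ x in cos b..cos a, 1 / √((1 - x ^ 2) * (1 - m + m * x ^ 2)) := by
  rw [← integral_comp_cos_mul_sin ha hb]
  refine intervalIntegral.integral_congr_uIoo fun t ht ↦ ?_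
  have sin_pos : 0 < sin t := sin_pos_of_mem_uIoo ha hb ht
  have modulus_eq : 1 - m + m * cos t ^ 2 = 1 - m * sin t ^ 2 := by
    rw [cos_sq']
    ring
  simp only [modulus_eq, ← sin_sq, sqrt_mul (sq_nonneg (sin t)), sqrt_sq sin_pos.le]
  field_simp

theorem integral_one_div_sqrt_one_sub_half_mul_sin_sq :
    ∫ t in (0 : ℝ)..(π / 2), 1 / √(1 - 1 / 2 * sin t ^ 2) =
      √2 * ∫ x in (0 : ℝ)..1, 1 / √(1 - x ^ 4) := by
  rw [integral_one_div_sqrt_one_sub_mul_sin_sq ⟨le_rfl, pi_pos.le⟩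
    ⟨pi_div_two_pos.le, half_le_self pi_pos.le⟩, cos_zero, cos_pi_div_two,
    ← intervalIntegral.integral_const_mul]
  refine intervalIntegral.integral_congr fun x _ ↦ ?_
  rw [show (1 - x ^ 2) * (1 - 1 / 2 + 1 / 2 * x ^ 2) = (1 - x ^ 4) / 2 by ring,
    sqrt_div' _ zero_le_two, one_div_div, mul_one_div]

end

open Real in
/-- The complete Legendre elliptic integral of the first kind with modulus
1/√2 equals the lemniscate constant divided by √2, i.e. Γ(1/4)²/(4√π). -/
theorem elliptic_integral_eq_lemniscate_constant :
    (∫ t in (0 : ℝ)..(Real.pi / 2),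
        1 / Real.sqrt (1 - (1 / 2) * Real.sin t ^ 2)) =
      (Real.Gamma (1 / 4)) ^ 2 / (2 * Real.sqrt (2 * Real.pi)) / Real.sqrt 2 ∧
    (∫ t in (0 : ℝ)..(Real.pi / 2),
        1 / Real.sqrt (1 - (1 / 2) * Real.sin t ^ 2)) =
      (Real.Gamma (1 / 4)) ^ 2 / (4 * Real.sqrt Real.pi) := by
  have legendre_eq : ∫ t in (0 : ℝ)..(π / 2), 1 / √(1 - 1 / 2 * sin t ^ 2) =
      √2 * (Gamma (1 / 4) ^ 2 / (4 * √(2 * π))) := by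
    rw [integral_one_div_sqrt_one_sub_half_mul_sin_sq, integral_one_div_sqrt_one_sub_pow_four]
  rw [legendre_eq, sqrt_mul zero_le_two]
  constructor
  · field_simp
    norm_num
  · field_simp
end
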